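/- arXiv:2109.05456 — 2 statements merged into one kernel-verified Lean document; each statement's English description precedes it below -/
import Mathlib

section
/- Let γ=(B,M,S,A,Â) be a market with middlemen and γ*=(B,S,A*) the associated two-sided assignment market. Then { (x;y;z)∈Core(v_γ) : y=0 } = { (x;0;z)∈R^B×R^M×R^S : (x;z)∈Core(w_{γ*}) }; that is, the facet of Core(v_γ) where all middlemen receive zero payoff coincides with the embedded core of the assignment game w_{γ*}. -/
/-!
Matching markets with middlemen (Atay, Bahel, Solymosi).

Players are of three sorts: buyers `B`, middlemen `M`, sellers `S`
(three disjoint nonempty finite types); the player set is `Player B M S = B ⊕ M ⊕ S`.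
An (functional representation of a) `T`-matching assigns to each buyer either nothing
(the buyer is single), a seller (direct trade), or a middleman together with a seller
(mediated trade); distinct buyers get distinct sellers, and all agents involved lie in `T`.
A middleman may mediate several trades.
-/

open scoped Classical

noncomputable section

/-- The set of players of a market with middlemen: buyers `B`, middlemen `M`, sellers `S`. -/
abbrev Player (B M S : Type*) := B ⊕ M ⊕ S

/-- Functional representation of a matching in the market with middlemen: each buyer is
unmatched (`none`), matched directly to a seller (`some (none, k)`), or matched to a seller
through a middleman (`some (some j, k)`). -/
abbrev MMatch (B M S : Type*) := B → Option (Option M × S)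

namespace Middlemen

variable {B M S : Type*}

/-- A buyer as a player. -/
def buyer (i : B) : Player B M S := Sum.inl i

/-- A middleman as a player. -/
def mid (j : M) : Player B M S := Sum.inr (Sum.inl j)

/-- A seller as a player. -/
def seller (k : S) : Player B M S := Sum.inr (Sum.inr k)

/-- `f` is a `T`-matching in the market with middlemen: every basic coalition used by `f`
is contained in `T` and no seller is matched to two distinct buyers.  (Buyers, middlemen
and sellers of `T` not appearing in any trade are singletons of the matching.) -/
def IsMatching (T : Finset (Player B M S)) (f : MMatch B M S) : Prop :=
  (∀ i o k, f i = some (o, k) →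
      buyer i ∈ T ∧ seller k ∈ T ∧ ∀ j, o = some j → mid j ∈ T) ∧
  (∀ i i' o o' k, f i = some (o, k) → f i' = some (o', k) → i = i')

variable [Fintype B] [Fintype M] [Fintype S]

/-- The value `Σ_{(i,k)∈μ} a_{ik} + Σ_{(i,j,k)∈μ} â_{ijk}` of a matching in the market
with middlemen with direct-trade surplus matrix `A` and mediated-trade surpluses `Ah`. -/
def mval (A : B → S → ℝ) (Ah : B → M → S → ℝ) (f : MMatch B M S) : ℝ :=
  ∑ i, (match f i with
    | none => 0
    | some (none, k) => A i k
    | some (some j, k) => Ah i j k)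

/-- The TU game `v_γ` associated with the market with middlemen `γ = (B,M,S,A,Ah)`:
the worth of a coalition `T` is the maximal value of a `T`-matching. -/
def vGame (A : B → S → ℝ) (Ah : B → M → S → ℝ) (T : Finset (Player B M S)) : ℝ :=
  sSup { r | ∃ f : MMatch B M S, IsMatching T f ∧ r = mval A Ah f }

/-- `g` is a matching of the coalition `R` in a two-sided assignment market. -/
def IsMatching2 (R : Finset (B ⊕ S)) (g : B → Option S) : Prop :=
  (∀ i k, g i = some k → Sum.inl i ∈ R ∧ Sum.inr k ∈ R) ∧
  (∀ i i' k, g i = some k → g i' = some k → i = i')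

/-- The value of a two-sided matching with valuation matrix `As`. -/
def m2val (As : B → S → ℝ) (g : B → Option S) : ℝ :=
  ∑ i, (match g i with
    | none => 0
    | some k => As i k)

/-- The assignment game `w_{γ*}` of the two-sided assignment market `(B,S,As)`. -/
def wGame (As : B → S → ℝ) (R : Finset (B ⊕ S)) : ℝ :=
  sSup { r | ∃ g : B → Option S, IsMatching2 R g ∧ r = m2val As g }

/-- The matrix `A*` of the associated two-sided assignment market:
`a*_{ik} = max_{j ∈ M} â_{ijk}`. -/
def Astar [Nonempty M] (Ah : B → M → S → ℝ) (i : B) (k : S) : ℝ :=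
  Finset.univ.sup' Finset.univ_nonempty fun j => Ah i j k

/-- The two-sided matching `μ*` induced by a matching `μ` of the market with middlemen:
keep all matched buyer–seller pairs (dropping the middlemen). -/
def star (f : MMatch B M S) : B → Option S := fun i => (f i).map Prod.snd

/-- `m(i,k)`: the lowest-indexed middleman `j` maximizing `â_{ijk}`. -/
def bestMid [Nonempty M] [LinearOrder M] (Ah : B → M → S → ℝ) (i : B) (k : S) : M :=
  (Finset.univ.filter fun j => ∀ j' : M, Ah i j' k ≤ Ah i j k).min' (by
    obtain ⟨j, -, hj⟩ := Finset.exists_max_image (Finset.univ : Finset M)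
      (fun j => Ah i j k) Finset.univ_nonempty
    exact ⟨j, Finset.mem_filter.mpr ⟨Finset.mem_univ _, fun j' => hj j' (Finset.mem_univ _)⟩⟩)

/-- The matching `σ^△` of the market with middlemen induced by a two-sided matching `σ`:
each matched pair `{i,k}` of `σ` trades through the best middleman `m(i,k)`
(and every other middleman is a singleton). -/
def triangle [Nonempty M] [LinearOrder M] (Ah : B → M → S → ℝ) (g : B → Option S) :
    MMatch B M S :=
  fun i => (g i).map fun k => (some (bestMid Ah i k), k)

/-- The core of a TU game on the finite player set `P`. -/
def core {P : Type*} [Fintype P] (v : Finset P → ℝ) : Set (P → ℝ) :=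
  { x | ∑ t, x t = v Finset.univ ∧ ∀ T : Finset P, v T ≤ ∑ t ∈ T, x t }

/-- Augment a payoff vector of the two-sided market with zero payoffs to all middlemen. -/
def aug (xz : B ⊕ S → ℝ) : Player B M S → ℝ := fun t =>
  match t with
  | Sum.inl i => xz (Sum.inl i)
  | Sum.inr (Sum.inl _) => 0
  | Sum.inr (Sum.inr k) => xz (Sum.inr k)

/-- Restrict a payoff vector of the market with middlemen to the buyers and sellers. -/
def restrictBS (X : Player B M S → ℝ) : B ⊕ S → ℝ := fun t =>
  match t with
  | Sum.inl i => X (buyer i)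
  | Sum.inr k => X (seller k)

/-- The set `T ∩ (B ∪ S)` of buyers and sellers of a coalition `T`. -/
def bsPart (T : Finset (Player B M S)) : Finset (B ⊕ S) :=
  Finset.univ.filter fun t =>
    match t with
    | Sum.inl i => buyer i ∈ T
    | Sum.inr k => (seller k : Player B M S) ∈ T

/-- The coalition `R ∪ M` consisting of the buyers and sellers of `R` together with
all middlemen. -/
def withAllMid (R : Finset (B ⊕ S)) : Finset (Player B M S) :=
  Finset.univ.filter fun t =>
    match t with
    | Sum.inl i => Sum.inl i ∈ R
    | Sum.inr (Sum.inl _) => True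
    | Sum.inr (Sum.inr k) => Sum.inr k ∈ R

end Middlemen

namespace Middlemen

section Helpers
variable {B M S : Type*} [Fintype B] [Fintype M] [Fintype S]

lemma sum_aug (xz : B ⊕ S → ℝ) (T : Finset (Player B M S)) :
    ∑ t ∈ T, (aug xz : Player B M S → ℝ) t = ∑ t ∈ bsPart T, xz t := by
  have h1 : ∑ t ∈ T, (aug xz : Player B M S → ℝ) t
      = ∑ t, if t ∈ T then (aug xz : Player B M S → ℝ) t else 0 := by simp
  rw [h1, bsPart, Finset.sum_filter, Fintype.sum_sum_type, Fintype.sum_sum_type,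
    Fintype.sum_sum_type]
  simp only [aug, buyer, seller, ite_self, Finset.sum_const_zero, zero_add]
  congr 1 <;> exact Finset.sum_congr rfl fun _ _ => by congr

lemma bsPart_withAllMid (R : Finset (B ⊕ S)) :
    bsPart (withAllMid R : Finset (Player B M S)) = R := by
  ext t
  rcases t with i | k <;> simp [bsPart, withAllMid, buyer, seller]

lemma bsPart_univ : bsPart (Finset.univ : Finset (Player B M S)) = Finset.univ := by
  ext t
  rcases t with i | k <;> simp [bsPart]

lemma withAllMid_univ :
    withAllMid (Finset.univ : Finset (B ⊕ S)) = (Finset.univ : Finset (Player B M S)) := by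
  ext t
  rcases t with i | j | k <;> simp [withAllMid]

lemma vGame_le [Nonempty M] (A : B → S → ℝ) (Ah : B → M → S → ℝ)
    (hAh : ∀ i j k, A i k ≤ Ah i j k) (T : Finset (Player B M S)) :
    vGame A Ah T ≤ wGame (Astar Ah) (bsPart T) := by
  have hle : ∀ i j k, Ah i j k ≤ Astar Ah i k := fun i j k =>
    Finset.le_sup' (fun j => Ah i j k) (Finset.mem_univ j)
  have hA' : ∀ i k, A i k ≤ Astar Ah i k := fun i k =>
    (hAh i (Classical.arbitrary M) k).trans (hle _ _ _)
  apply csSup_le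
  · exact ⟨_, fun _ => none, ⟨by simp, by simp⟩, rfl⟩
  · rintro r ⟨f, ⟨hf1, hf2⟩, rfl⟩
    have hval : mval A Ah f ≤ m2val (Astar Ah) (star f) := by
      apply Finset.sum_le_sum
      intro i _
      rcases hfi : f i with _ | ⟨_ | j, k⟩ <;> simp [star, hfi, hA', hle]
    refine hval.trans (le_csSup ?_ ⟨star f, ⟨?_, ?_⟩, rfl⟩)
    · refine ((Set.finite_range (m2val (Astar Ah))).subset ?_).bddAbove
      rintro r ⟨g, -, rfl⟩
      exact ⟨g, rfl⟩
    · intro i k h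
      simp only [star, Option.map_eq_some_iff] at h
      obtain ⟨⟨o, k'⟩, h, rfl⟩ := h
      have := hf1 i o k' h
      simpa [bsPart] using And.intro this.1 this.2.1
    · intro i i' k h h'
      simp only [star, Option.map_eq_some_iff] at h h'
      obtain ⟨⟨o, k'⟩, h, rfl⟩ := h
      obtain ⟨⟨o', k''⟩, h', hk⟩ := h'
      simp only at hk
      subst hk
      exact hf2 i i' o o' _ h h'

lemma wGame_le [Nonempty M] (A : B → S → ℝ) (Ah : B → M → S → ℝ)
    (R : Finset (B ⊕ S)) :
    wGame (Astar Ah) R ≤ vGame A Ah (withAllMid R) := by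
  have hex : ∀ i k, ∃ j, Astar Ah i k = Ah i j k := fun i k => by
    obtain ⟨j, -, hj⟩ := Finset.exists_mem_eq_sup' (Finset.univ_nonempty (α := M))
      (fun j => Ah i j k)
    exact ⟨j, hj⟩
  choose b hb using hex
  apply csSup_le
  · exact ⟨_, fun _ => none, ⟨by simp, by simp⟩, rfl⟩
  · rintro r ⟨g, ⟨hg1, hg2⟩, rfl⟩
    let f : MMatch B M S := fun i => (g i).map fun k => (some (b i k), k)
    have hval : m2val (Astar Ah) g = mval A Ah f := by
      apply Finset.sum_congr rfl
      intro i _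
      rcases hgi : g i with _ | k <;> simp [f, hgi, hb]
    rw [hval]
    refine le_csSup ?_ ⟨f, ⟨?_, ?_⟩, rfl⟩
    · refine ((Set.finite_range (mval A Ah)).subset ?_).bddAbove
      rintro r ⟨g, -, rfl⟩
      exact ⟨g, rfl⟩
    · intro i o k h
      simp only [f, Option.map_eq_some_iff, Prod.mk.injEq] at h
      obtain ⟨k', h, -, rfl⟩ := h
      have := hg1 i k' h
      simpa [withAllMid, buyer, seller, mid] using this
    · intro i i' o o' k h h'
      simp only [f, Option.map_eq_some_iff, Prod.mk.injEq] at h h'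
      obtain ⟨k', h, -, rfl⟩ := h
      obtain ⟨k'', h', -, rfl⟩ := h'
      exact hg2 i i' _ h h'

end Helpers

/-- the facet of `Core(v_γ)` where all middlemen receive zero payoff
coincides with the embedded core of the assignment game `w_γ*`. -/
theorem core_zero_facet_eq
    {B M S : Type*} [Fintype B] [Fintype M] [Fintype S]
    [Nonempty B] [Nonempty M] [Nonempty S]
    (A : B → S → ℝ) (Ah : B → M → S → ℝ)
    (hA : ∀ i k, 0 ≤ A i k) (hAh : ∀ i j k, A i k ≤ Ah i j k) :
    { X : Player B M S → ℝ | X ∈ core (vGame A Ah) ∧ ∀ j : M, X (mid j) = 0 } =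
      { X : Player B M S → ℝ | ∃ xz ∈ core (wGame (Astar Ah)), X = aug xz } := by
  have huniv : vGame A Ah Finset.univ = wGame (Astar Ah) Finset.univ := by
    apply le_antisymm
    · have := vGame_le A Ah hAh Finset.univ
      rwa [bsPart_univ] at this
    · have := wGame_le A Ah (Finset.univ : Finset (B ⊕ S))
      rwa [withAllMid_univ] at this
  ext X
  constructor
  · rintro ⟨⟨h1, h2⟩, h0⟩
    have hX : X = aug (restrictBS X) := by
      funext t
      rcases t with i | j | k
      · rfl
      · exact h0 j
      · rfl
    refine ⟨restrictBS X, ⟨?_, ?_⟩, hX⟩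
    · rw [← huniv, ← h1]
      conv_rhs => rw [hX, sum_aug, bsPart_univ]
    · intro R
      have h := (wGame_le A Ah R).trans (h2 (withAllMid R))
      rw [hX, sum_aug, bsPart_withAllMid] at h
      exact h
  · rintro ⟨xz, ⟨h1, h2⟩, rfl⟩
    refine ⟨⟨?_, ?_⟩, fun j => rfl⟩
    · rw [sum_aug, bsPart_univ, huniv, h1]
    · intro T
      rw [sum_aug]
      exact (vGame_le A Ah hAh T).trans (h2 _)

end Middlemen
end
end

section
/- Let γ=(B,M,S,A,Â) be a market with middlemen and v_γ the associated middlemen matching market game. Then there exists a seller-optimal core allocation: a payoff vector x^S∈Core(v_γ) such that x^S_k = mc_k(v_γ) for every seller k∈S, i.e. every seller simultaneously attains her marginal contribution to the grand coalition. -/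
/-!
Matching markets with middlemen (Atay, Bahel, Solymosi).

Players are of three sorts: buyers `B`, middlemen `M`, sellers `S`
(three disjoint nonempty finite types); the player set is `Player B M S = B ⊕ M ⊕ S`.
An (functional representation of a) `T`-matching assigns to each buyer either nothing
(the buyer is single), a seller (direct trade), or a middleman together with a seller
(mediated trade); distinct buyers get distinct sellers, and all agents involved lie in `T`.
A middleman may mediate several trades.
-/

open scoped Classical

noncomputable section

namespace Middlemen

lemma exists_eps {ι : Type*} [Finite ι] (P : ι → Prop) (g : ι → ℝ) (h : ∀ i, P i → 0 < g i) :
    ∃ ε : ℝ, 0 < ε ∧ ∀ i, P i → ε ≤ g i := by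
  cases nonempty_fintype ι
  rcases (Finset.univ.filter P).eq_empty_or_nonempty with he | hne
  · refine ⟨1, one_pos, fun i hi => ?_⟩
    have : i ∈ Finset.univ.filter P := by simp [hi]
    rw [he] at this; simp at this
  · obtain ⟨i, hi, hm⟩ := Finset.exists_min_image _ g hne
    refine ⟨g i, h i (by simpa using hi), fun j hj => hm j (by simp [hj])⟩

lemma exists_min_dual {n : Type*} [Fintype n] [Nonempty n] (c : n → n → ℝ)
    (hc : ∀ i j, 0 ≤ c i j) :
    ∃ y z : n → ℝ, (∀ i, 0 ≤ y i) ∧ (∀ i j, c i j ≤ y i + z j) ∧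
      ∀ y' z' : n → ℝ, (∀ i, 0 ≤ y' i) → (∀ i j, c i j ≤ y' i + z' j) →
        (Fintype.card n + 1 : ℝ) * ∑ i, y i + (Fintype.card n : ℝ) * ∑ j, z j ≤
        (Fintype.card n + 1 : ℝ) * ∑ i, y' i + (Fintype.card n : ℝ) * ∑ j, z' j := by
  set N : ℝ := (Fintype.card n : ℝ) with hN
  have hN0 : 0 ≤ N := by positivity
  let Z : (n → ℝ) → n → ℝ := fun y j =>
    Finset.univ.sup' Finset.univ_nonempty (fun i => c i j - y i)
  have hZf : ∀ y i j, c i j ≤ y i + Z y j := by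
    intro y i j
    have := Finset.le_sup' (fun i => c i j - y i) (Finset.mem_univ i)
    simp only [Z]; linarith
  have hZle : ∀ y z' : n → ℝ, (∀ i j, c i j ≤ y i + z' j) → ∀ j, Z y j ≤ z' j := by
    intro y z' h j
    apply Finset.sup'_le
    intro i _
    linarith [h i j]
  let F : (n → ℝ) → ℝ := fun y => (N + 1) * ∑ i, y i + N * ∑ j, Z y j
  have hF : Continuous F := by
    have : ∀ j, Continuous fun y => Z y j := by
      intro j
      apply Continuous.finset_sup'_apply
      intro i _
      fun_prop
    fun_prop
  have hFy : ∀ y : n → ℝ, ∑ i, y i ≤ F y := by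
    intro y
    have h1 : 0 ≤ ∑ i, (y i + Z y i) :=
      Finset.sum_nonneg fun i _ => (hc i i).trans (hZf y i i)
    rw [Finset.sum_add_distrib] at h1
    simp only [F]
    nlinarith
  have hR : 0 ≤ F 0 := by simpa using hFy 0
  obtain ⟨y, hy, hmin⟩ := (isCompact_Icc (a := (0 : n → ℝ)) (b := fun _ => F 0)).exists_isMinOn
    ⟨0, le_refl _, fun _ => hR⟩ hF.continuousOn
  refine ⟨y, Z y, hy.1, hZf y, fun y' z' hy' hf => ?_⟩
  have h1 : F y ≤ F y' := by
    by_cases h : y' ∈ Set.Icc (0 : n → ℝ) (fun _ => F 0)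
    · exact hmin h
    · have h0 : F y ≤ F 0 := hmin ⟨le_refl _, fun _ => hR⟩
      have : ¬ ∀ i, y' i ≤ F 0 := fun h' => h ⟨hy', h'⟩
      push Not at this
      obtain ⟨i, hi⟩ := this
      have := Finset.single_le_sum (fun i _ => hy' i) (Finset.mem_univ i)
      linarith [hFy y']
  refine h1.trans ?_
  have := Finset.sum_le_sum (s := Finset.univ) (fun j _ => hZle y' z' hf j)
  simp only [F]
  nlinarith

lemma square {n : Type*} [Fintype n] [Nonempty n] (c : n → n → ℝ)
    (hc : ∀ i j, 0 ≤ c i j) :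
    ∃ y z : n → ℝ, (∀ i, 0 ≤ y i) ∧ (∀ i j, c i j ≤ y i + z j) ∧
      (∃ σ : n → n, Function.Injective σ ∧ ∀ i, c i (σ i) = y i + z (σ i)) ∧
      ∀ k, ∃ π : n → n, Function.Injective π ∧
        ∀ i, (π i = k → y i = 0) ∧ (π i ≠ k → c i (π i) = y i + z (π i)) := by
  obtain ⟨y, z, hy, hf, hmin⟩ := exists_min_dual c hc
  refine ⟨y, z, hy, hf, ?_⟩
  let Nb : Finset n → Finset n := fun X =>
    Finset.univ.filter fun j => ∃ i ∈ X, c i j = y i + z j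
  have gap : ∀ X : Finset n, ∃ ε : ℝ, 0 < ε ∧ ∀ p : n × n, (p.1 ∈ X ∧ p.2 ∉ Nb X) →
      ε ≤ y p.1 + z p.2 - c p.1 p.2 := by
    intro X
    apply exists_eps
    rintro ⟨i, j⟩ ⟨hi, hj⟩
    have h1 : c i j ≠ y i + z j := fun h => hj (by simp only [Nb, Finset.mem_filter]; exact ⟨Finset.mem_univ _, i, hi, h⟩)
    have := lt_of_le_of_ne (hf i j) h1
    simp only; linarith
  have sumind : ∀ X : Finset n, ∑ i, (if i ∈ X then (1:ℝ) else 0) = X.card := by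
    intro X; simp
  -- case A
  have hallA : ∀ X : Finset n, X.card ≤ (Nb X).card := by
    intro X
    by_contra hlt
    push Not at hlt
    obtain ⟨ε, hε, hgap⟩ := gap X
    have := hmin (fun i => y i + ε * (1 - if i ∈ X then (1:ℝ) else 0))
      (fun j => z j - ε * (1 - if j ∈ Nb X then (1:ℝ) else 0))
      (fun i => by have := hy i; split_ifs <;> linarith)
      (fun i j => by
        have h1 := hf i j
        have h2 := hgap (i, j)
        by_cases hi : i ∈ X <;> by_cases hj : j ∈ Nb X <;> simp only [hi, hj, if_true, if_false]
        · linarith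
        · have := h2 ⟨hi, hj⟩; simp only at this; linarith
        · linarith
        · linarith)
    simp only [Finset.sum_add_distrib, Finset.sum_sub_distrib, ← Finset.mul_sum, sumind] at this
    simp only [Finset.sum_const, Finset.card_univ, nsmul_eq_mul, mul_one] at this
    have h3 : ((Nb X).card : ℝ) + 1 ≤ X.card := by exact_mod_cast hlt
    have h4 : (0 : ℝ) < X.card := by
      have : (0:ℝ) ≤ (Nb X).card := by positivity
      linarith
    have hN0 : (0:ℝ) ≤ Fintype.card n := by positivity
    set N : ℝ := (Fintype.card n : ℝ)
    have h5 : 0 ≤ ε * ((N + 1) * (N - X.card) - N * (N - (Nb X).card)) := by nlinarith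
    have h6 := nonneg_of_mul_nonneg_right h5 hε
    nlinarith
  have hallB : ∀ X : Finset n, X.Nonempty → (∀ i ∈ X, 0 < y i) → X.card + 1 ≤ (Nb X).card := by
    intro X hne hpos
    by_contra hlt
    push Not at hlt
    obtain ⟨ε₁, hε₁, hgap₁⟩ := gap X
    obtain ⟨ε₂, hε₂, hgap₂⟩ := exists_eps (fun i => i ∈ X) y hpos
    obtain ⟨ε, hε, hle₁, hle₂⟩ : ∃ ε : ℝ, 0 < ε ∧ ε ≤ ε₁ ∧ ε ≤ ε₂ :=
      ⟨min ε₁ ε₂, lt_min hε₁ hε₂, min_le_left _ _, min_le_right _ _⟩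
    have := hmin (fun i => y i - ε * (if i ∈ X then (1:ℝ) else 0))
      (fun j => z j + ε * (if j ∈ Nb X then (1:ℝ) else 0))
      (fun i => by
        have := hy i
        have h2 := hgap₂ i
        split_ifs with hi
        · have := h2 hi; linarith
        · linarith)
      (fun i j => by
        have h1 := hf i j
        have h2 := hgap₁ (i, j)
        by_cases hi : i ∈ X <;> by_cases hj : j ∈ Nb X <;> simp only [hi, hj, if_true, if_false]
        · linarith
        · have := h2 ⟨hi, hj⟩; simp only at this; linarith
        · linarith
        · linarith)
    simp only [Finset.sum_add_distrib, Finset.sum_sub_distrib, ← Finset.mul_sum, sumind] at this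
    have h3 : ((Nb X).card : ℝ) ≤ X.card := by exact_mod_cast Nat.lt_succ_iff.mp hlt
    have h4 : (0 : ℝ) < X.card := by exact_mod_cast hne.card_pos
    have hN0 : (0:ℝ) ≤ Fintype.card n := by positivity
    set N : ℝ := (Fintype.card n : ℝ)
    have h5 : 0 ≤ ε * (N * (Nb X).card - (N + 1) * X.card) := by nlinarith
    have h6 := nonneg_of_mul_nonneg_right h5 hε
    nlinarith
  constructor
  · obtain ⟨σ, hσ, h⟩ := (Fintype.all_card_le_filter_rel_iff_exists_injective
      (fun i j => c i j = y i + z j)).mp hallA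
    exact ⟨σ, hσ, h⟩
  · intro k
    obtain ⟨π, hπ, h⟩ := (Fintype.all_card_le_filter_rel_iff_exists_injective
      (fun i j => (j = k → y i = 0) ∧ (j ≠ k → c i j = y i + z j))).mp (by
        intro X
        by_cases h0 : ∃ i ∈ X, y i = 0
        · obtain ⟨i, hi, h0⟩ := h0
          refine (hallA X).trans (Finset.card_le_card ?_)
          intro j hj
          simp only [Nb, Finset.mem_filter, Finset.mem_univ, true_and] at hj ⊢
          by_cases hjk : j = k
          · exact ⟨i, hi, fun _ => h0, fun h => absurd hjk h⟩
          · obtain ⟨i', hi', h'⟩ := hj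
            exact ⟨i', hi', fun h => absurd h hjk, fun _ => h'⟩
        · rcases X.eq_empty_or_nonempty with rfl | hne
          · simp
          push Not at h0
          have h1 := hallB X hne (fun i hi => lt_of_le_of_ne (hy i) (h0 i hi).symm)
          have h2 : X.card ≤ ((Nb X).erase k).card := by
            have := Finset.pred_card_le_card_erase (s := Nb X) (a := k)
            omega
          refine h2.trans (Finset.card_le_card ?_)
          intro j hj
          simp only [Nb, Finset.mem_erase, Finset.mem_filter, Finset.mem_univ, true_and] at hj ⊢
          obtain ⟨hjk, i', hi', h'⟩ := hj
          exact ⟨i', hi', fun h => absurd h hjk, fun _ => h'⟩)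
    exact ⟨π, hπ, h⟩

section game
variable {B M S : Type*} [Fintype B] [Fintype M] [Fintype S]

lemma vset_finite (A : B → S → ℝ) (Ah : B → M → S → ℝ) (T : Finset (Player B M S)) :
    { r | ∃ f : MMatch B M S, IsMatching T f ∧ r = mval A Ah f }.Finite := by
  refine (Set.finite_range (fun f : MMatch B M S => mval A Ah f)).subset ?_
  rintro r ⟨f, -, rfl⟩
  exact ⟨f, rfl⟩

lemma le_vGame (A : B → S → ℝ) (Ah : B → M → S → ℝ) (T : Finset (Player B M S))
    (f : MMatch B M S) (hf : IsMatching T f) : mval A Ah f ≤ vGame A Ah T :=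
  le_csSup (vset_finite A Ah T).bddAbove ⟨f, hf, rfl⟩

lemma vGame_le_s14 (A : B → S → ℝ) (Ah : B → M → S → ℝ) (T : Finset (Player B M S)) (r : ℝ)
    (h : ∀ f : MMatch B M S, IsMatching T f → mval A Ah f ≤ r) : vGame A Ah T ≤ r := by
  refine csSup_le ⟨_, fun _ => none, ⟨?_, ?_⟩, rfl⟩ ?_
  · intro i o k h; simp at h
  · intro i i' o o' k h; simp at h
  · rintro _ ⟨f, hf, rfl⟩
    exact h f hf

/-- payoff vector -/
def pay (y : B → ℝ) (z : S → ℝ) : Player B M S → ℝ := fun t =>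
  match t with
  | Sum.inl i => y i
  | Sum.inr (Sum.inl _) => 0
  | Sum.inr (Sum.inr k) => z k

lemma sum_pay (y : B → ℝ) (z : S → ℝ) (T : Finset (Player B M S)) :
    ∑ t ∈ T, pay y z t = (∑ i, if (buyer i : Player B M S) ∈ T then y i else 0) +
      ∑ k, if (seller k : Player B M S) ∈ T then z k else 0 := by
  have : ∑ t ∈ T, pay y z t = ∑ t, if t ∈ T then pay y z t else 0 := by simp
  rw [this, Fintype.sum_sum_type, Fintype.sum_sum_type]
  simp only [pay, buyer, seller, ite_self, Finset.sum_const_zero, zero_add]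
  congr!

lemma vGame_le_pay (A : B → S → ℝ) (Ah : B → M → S → ℝ) (y : B → ℝ) (z : S → ℝ)
    (hy : ∀ i, 0 ≤ y i) (hz : ∀ k, 0 ≤ z k)
    (h1 : ∀ i k, A i k ≤ y i + z k) (h2 : ∀ i j k, Ah i j k ≤ y i + z k)
    (T : Finset (Player B M S)) : vGame A Ah T ≤ ∑ t ∈ T, pay y z t := by
  apply vGame_le_s14
  intro f hf
  rw [sum_pay]
  have e1 : mval A Ah f ≤ ∑ i, ((if (buyer i : Player B M S) ∈ T then y i else 0) +
      ∑ k, if star f i = some k then z k else 0) := by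
    unfold mval
    apply Finset.sum_le_sum
    intro i _
    have hb : 0 ≤ (if (buyer i : Player B M S) ∈ T then y i else 0) := by
      split_ifs
      · exact hy i
      · exact le_refl _
    rcases h : f i with _ | ⟨_ | j, k⟩
    · simpa [star, h] using hb
    · have := (hf.1 i _ k h).1
      simpa [star, h, this] using h1 i k
    · have := (hf.1 i _ k h).1
      simpa [star, h, this] using h2 i j k
  refine e1.trans ?_
  rw [Finset.sum_add_distrib, Finset.sum_comm (s := Finset.univ) (t := Finset.univ) (f := fun i k => if star f i = some k then z k else 0)]
  gcongr with k _
  by_cases hk : ∃ i, star f i = some k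
  · obtain ⟨i, hi⟩ := hk
    have hi' := hi
    simp only [star, Option.map_eq_some_iff] at hi
    obtain ⟨⟨o, k'⟩, ho, rfl⟩ := hi
    rw [Finset.sum_eq_single i, if_pos hi', if_pos (hf.1 i _ _ ho).2.1]
    · intro i' _ hne
      rw [if_neg]
      intro h'
      simp only [star, Option.map_eq_some_iff] at h'
      obtain ⟨⟨o', k''⟩, ho', h''⟩ := h'
      simp only at h''
      subst h''
      exact hne (hf.2 _ _ _ _ _ ho' ho)
    · simp
  · push Not at hk
    rw [Finset.sum_eq_zero]
    · split_ifs
      · exact hz k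
      · exact le_refl _
    · intro i _
      rw [if_neg (hk i)]

/-- padded square matrix -/
def padM [Nonempty M] (Ah : B → M → S → ℝ) : B ⊕ S → B ⊕ S → ℝ := fun r s =>
  match r, s with
  | Sum.inl i, Sum.inr k => Astar Ah i k
  | _, _ => 0

lemma padM_le_vGame [Nonempty M] (A : B → S → ℝ) (Ah : B → M → S → ℝ)
    (D : Set S) (T : Finset (Player B M S)) (hb : ∀ i, buyer i ∈ T) (hm : ∀ j, mid j ∈ T)
    (hs : ∀ k, k ∉ D → seller k ∈ T) (σ : B ⊕ S → B ⊕ S) (hσ : Function.Injective σ) :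
    ∑ r, (if ∃ k ∈ D, σ r = Sum.inr k then 0 else padM Ah r (σ r)) ≤ vGame A Ah T := by
  have hbest : ∀ i k, ∃ j, Astar Ah i k = Ah i j k := by
    intro i k
    obtain ⟨j, -, hj⟩ := Finset.exists_mem_eq_sup' (s := (Finset.univ : Finset M))
      Finset.univ_nonempty (fun j => Ah i j k)
    exact ⟨j, hj⟩
  choose m hm' using hbest
  let f : MMatch B M S := fun i =>
    match σ (Sum.inl i) with
    | Sum.inl _ => none
    | Sum.inr k => if k ∈ D then none else some (some (m i k), k)
  have hfs : ∀ i o k, f i = some (o, k) → σ (Sum.inl i) = Sum.inr k ∧ k ∉ D := by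
    intro i o k h
    simp only [f] at h
    split at h
    · simp at h
    · rename_i k' hk'
      split_ifs at h with hD
      simp only [Option.some.injEq, Prod.mk.injEq] at h
      obtain ⟨-, rfl⟩ := h
      exact ⟨hk', hD⟩
  have hf : IsMatching T f := by
    refine ⟨fun i o k h => ⟨hb i, hs k (hfs i o k h).2, fun j _ => hm j⟩, ?_⟩
    intro i i' o o' k h h'
    have := hσ ((hfs _ _ _ h).1.trans (hfs _ _ _ h').1.symm)
    exact Sum.inl_injective this
  refine le_trans (le_of_eq ?_) (le_vGame A Ah T f hf)
  rw [Fintype.sum_sum_type]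
  have h0 : ∑ k : S, (if ∃ k' ∈ D, σ (Sum.inr k) = Sum.inr k' then 0
      else padM Ah (Sum.inr k) (σ (Sum.inr k))) = 0 := by
    apply Finset.sum_eq_zero
    intro k _
    simp [padM]
  rw [h0, add_zero]
  unfold mval
  apply Finset.sum_congr rfl
  intro i _
  rcases h : σ (Sum.inl i) with i' | k
  · simp [f, h, padM]
  · by_cases hk : k ∈ D
    · simp [f, h, hk]
    · simp [f, h, hk, padM, hm']

end game

/-- there exists a seller-optimal core allocation of `v_γ`, at which every
seller attains her marginal contribution to the grand coalition. -/
theorem exists_seller_optimal_core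
    {B M S : Type*} [Fintype B] [Fintype M] [Fintype S]
    [Nonempty B] [Nonempty M] [Nonempty S]
    (A : B → S → ℝ) (Ah : B → M → S → ℝ)
    (hA : ∀ i k, 0 ≤ A i k) (hAh : ∀ i j k, A i k ≤ Ah i j k) :
    ∃ x ∈ core (vGame A Ah), ∀ k : S,
      x (seller k) = vGame A Ah Finset.univ - vGame A Ah (Finset.univ.erase (seller k)) := by
  have hAs : ∀ i j k, Ah i j k ≤ Astar Ah i k := fun i j k =>
    Finset.le_sup' (fun j => Ah i j k) (Finset.mem_univ j)
  have hc : ∀ r s, 0 ≤ padM Ah r s := by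
    rintro (i | k) (i' | k') <;> simp only [padM, le_refl]
    obtain ⟨j⟩ := ‹Nonempty M›
    exact (hA i k').trans ((hAh i j k').trans (hAs i j k'))
  obtain ⟨y, z, hy, hf, ⟨σ, hσ, hσt⟩, hk⟩ := square (padM Ah) hc
  have hz : ∀ s, 0 ≤ z s := by
    intro s
    obtain ⟨π, hπ, h⟩ := hk s
    obtain ⟨r, hr⟩ := (Finite.injective_iff_surjective.mp hπ) s
    have h1 := (h r).1 hr
    have h2 := hf r s
    have h3 := hc r s
    linarith
  have hst : ∀ i j k, Ah i j k ≤ y (Sum.inl i) + z (Sum.inr k) := fun i j k =>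
    (hAs i j k).trans (hf (Sum.inl i) (Sum.inr k))
  have hst' : ∀ i k, A i k ≤ y (Sum.inl i) + z (Sum.inr k) := fun i k =>
    (hAh i (Classical.arbitrary M) k).trans (hst i _ k)
  let x : Player B M S → ℝ := pay (fun i => y (Sum.inl i)) (fun k => z (Sum.inr k))
  have hub : ∀ T, vGame A Ah T ≤ ∑ t ∈ T, x t :=
    vGame_le_pay A Ah _ _ (fun i => hy _) (fun k => hz _) hst' hst
  have hsum : ∀ π : B ⊕ S → B ⊕ S, Function.Injective π → ∑ r, z (π r) = ∑ r, z r :=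
    fun π hπ => (Equiv.ofBijective π (Finite.injective_iff_bijective.mp hπ)).sum_comp z
  have hxle : ∑ t, x t ≤ ∑ r, y r + ∑ r, z r := by
    have h1 := sum_pay (M := M) (fun i : B => y (Sum.inl i)) (fun k : S => z (Sum.inr k)) Finset.univ
    simp only [Finset.mem_univ, if_true] at h1
    simp only [x]
    rw [h1, Fintype.sum_sum_type, Fintype.sum_sum_type]
    have h2 : 0 ≤ ∑ k : S, y (Sum.inr k) := Finset.sum_nonneg fun _ _ => hy _
    have h3 : 0 ≤ ∑ i : B, z (Sum.inl i) := Finset.sum_nonneg fun _ _ => hz _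
    linarith
  have hlow : ∑ r, y r + ∑ r, z r ≤ vGame A Ah Finset.univ := by
    have h1 := padM_le_vGame A Ah ∅ Finset.univ (by simp) (by simp) (by simp) σ hσ
    simp only [Set.mem_empty_iff_false, false_and, exists_false, if_false, hσt] at h1
    rwa [Finset.sum_add_distrib, hsum σ hσ] at h1
  have heff : ∑ t, x t = vGame A Ah Finset.univ :=
    le_antisymm (hxle.trans hlow) (hub _)
  refine ⟨x, ⟨heff, hub⟩, fun k => ?_⟩
  have hxk : x (seller k) = z (Sum.inr k) := rfl
  have hup := hub (Finset.univ.erase (seller k))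
  have he := Finset.add_sum_erase Finset.univ x (Finset.mem_univ (seller k))
  obtain ⟨π, hπ, h⟩ := hk (Sum.inr k)
  have h1 := padM_le_vGame A Ah {k} (Finset.univ.erase (seller k))
    (by simp [buyer, seller]) (by simp [mid, seller])
    (by intro k' hk'; simpa [seller] using hk') π hπ
  have h2 : ∑ r, (if ∃ k' ∈ ({k} : Set S), π r = Sum.inr k' then 0 else padM Ah r (π r)) =
      ∑ r, (y r + z (π r) - if Sum.inr k = π r then z (Sum.inr k) else 0) := by
    apply Finset.sum_congr rfl
    intro r _
    by_cases hr : π r = Sum.inr k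
    · simp [hr, (h r).1 hr]
    · simp [hr, Ne.symm hr, (h r).2 hr]
  have h3 : ∑ r, (if Sum.inr k = π r then z (Sum.inr k) else 0) = z (Sum.inr k) := by
    have := (Equiv.ofBijective π (Finite.injective_iff_bijective.mp hπ)).sum_comp
      (fun s => if Sum.inr k = s then z (Sum.inr k) else 0)
    simp only [Equiv.ofBijective_apply] at this
    rw [this]; simp
  have h4 : ∑ r, (y r + z (π r) - if Sum.inr k = π r then z (Sum.inr k) else 0) ≤
      vGame A Ah (Finset.univ.erase (seller k)) := by
    rw [← h2]
    convert h1
  rw [Finset.sum_sub_distrib, Finset.sum_add_distrib, hsum π hπ, h3] at h4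
  linarith

end Middlemen
end
end
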